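/- The lifting operator Q is globally Lipschitz in the weighted total variation metric: if ‖H‖_∞ ≤ κ_H and Γ is symmetric positive definite, then for all probability measures μ, ν on R^d, d_g(Qμ, Qν) ≤ (1 + κ_H² + tr(Γ)) d_g(μ, ν), where on the left d_g is the weighted total variation metric on P(R^d × R^K) with weight g(u, y) = 1 + |u|² + |y|². -/

import Mathlib

open MeasureTheory Matrix
open scoped BigOperators ENNReal

noncomputable section

namespace EnKF

/-- Points of `ℝ^n`, with Lebesgue measure as `volume`. -/
abbrev Vec (n : ℕ) := Fin n → ℝ

/-- Euclidean norm of a finitely indexed real vector. -/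
def enorm {ι : Type*} [Fintype ι] (v : ι → ℝ) : ℝ := Real.sqrt (∑ i, v i ^ 2)

/-- The weight function `g(v) = 1 + |v|²` on `ℝ^n`. -/
def gw {n : ℕ} (v : Vec n) : ℝ := 1 + ∑ i, v i ^ 2

/-- The weight function `g(u, y) = 1 + |u|² + |y|²` on `ℝ^d × ℝ^K`. -/
def gw2 {d K : ℕ} (p : Vec d × Vec K) : ℝ := 1 + (∑ i, p.1 i ^ 2) + (∑ j, p.2 j ^ 2)

/-- Weighted total-variation metric with weight `G`:
`d_G(μ₁, μ₂) = sup { |μ₁[f] − μ₂[f]| : f measurable, |f| ≤ G pointwise }`. -/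
def dG {E : Type*} [MeasurableSpace E] (G : E → ℝ) (μ₁ μ₂ : Measure E) : ℝ :=
  ⨆ f : {f : E → ℝ // Measurable f ∧ ∀ v, |f v| ≤ G v},
    |(∫ v, f.1 v ∂μ₁) - ∫ v, f.1 v ∂μ₂|

/-- Loewner order on symmetric matrices: `loe A B ↔ A ≼ B`. -/
def loe {ι : Type*} [Fintype ι] (A B : Matrix ι ι ℝ) : Prop := (B - A).PosSemidef

/-- Mean vector of a measure on `ℝ^n`. -/
def mean {n : ℕ} (μ : Measure (Vec n)) : Vec n := fun i => ∫ v, v i ∂μ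

/-- Covariance matrix of a measure on `ℝ^n`. -/
def cov {n : ℕ} (μ : Measure (Vec n)) : Matrix (Fin n) (Fin n) ℝ :=
  Matrix.of fun i j => ∫ v, (v i - mean μ i) * (v j - mean μ j) ∂μ

/-- Density of the Gaussian `N(m, S)` on `ℝ^n`. -/
def gaussDensity {n : ℕ} (m : Vec n) (S : Matrix (Fin n) (Fin n) ℝ) (x : Vec n) : ℝ :=
  (Real.sqrt ((2 * Real.pi) ^ n * S.det))⁻¹ *
    Real.exp (-(1 / 2) * ((x - m) ⬝ᵥ (S⁻¹ *ᵥ (x - m))))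

/-- The (nondegenerate) Gaussian measure `N(m, S)` on `ℝ^n`. -/
def gauss {n : ℕ} (m : Vec n) (S : Matrix (Fin n) (Fin n) ℝ) : Measure (Vec n) :=
  volume.withDensity fun x => ENNReal.ofReal (gaussDensity m S x)

/-- Gaussian projection `G` on `ℝ^n`: the Gaussian with the same mean and covariance. -/
def Gproj {n : ℕ} (μ : Measure (Vec n)) : Measure (Vec n) := gauss (mean μ) (cov μ)

variable {d K : ℕ}

/-- Mean of the first (state) marginal of a measure on `ℝ^d × ℝ^K`. -/
def meanU (π : Measure (Vec d × Vec K)) : Vec d := fun i => ∫ p, p.1 i ∂π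

/-- Mean of the second (data) marginal of a measure on `ℝ^d × ℝ^K`. -/
def meanY (π : Measure (Vec d × Vec K)) : Vec K := fun j => ∫ p, p.2 j ∂π

/-- Block `C^{uu}` of the covariance of a measure on `ℝ^d × ℝ^K`. -/
def covUU (π : Measure (Vec d × Vec K)) : Matrix (Fin d) (Fin d) ℝ :=
  Matrix.of fun i j => ∫ p, (p.1 i - meanU π i) * (p.1 j - meanU π j) ∂π

/-- Block `C^{uy}` of the covariance of a measure on `ℝ^d × ℝ^K`. -/
def covUY (π : Measure (Vec d × Vec K)) : Matrix (Fin d) (Fin K) ℝ :=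
  Matrix.of fun i j => ∫ p, (p.1 i - meanU π i) * (p.2 j - meanY π j) ∂π

/-- Block `C^{yy}` of the covariance of a measure on `ℝ^d × ℝ^K`. -/
def covYY (π : Measure (Vec d × Vec K)) : Matrix (Fin K) (Fin K) ℝ :=
  Matrix.of fun i j => ∫ p, (p.2 i - meanY π i) * (p.2 j - meanY π j) ∂π

/-- Full covariance matrix of a measure on `ℝ^d × ℝ^K`, in block form. -/
def covBlock (π : Measure (Vec d × Vec K)) : Matrix (Fin d ⊕ Fin K) (Fin d ⊕ Fin K) ℝ :=
  Matrix.fromBlocks (covUU π) (covUY π) (covUY π)ᵀ (covYY π)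

/-- Density of a Gaussian on `ℝ^d × ℝ^K` with mean `(mu, my)` and covariance `S`. -/
def jointGaussDensity (mu : Vec d) (my : Vec K)
    (S : Matrix (Fin d ⊕ Fin K) (Fin d ⊕ Fin K) ℝ) (p : Vec d × Vec K) : ℝ :=
  (Real.sqrt ((2 * Real.pi) ^ (d + K) * S.det))⁻¹ *
    Real.exp (-(1 / 2) *
      (Sum.elim (p.1 - mu) (p.2 - my) ⬝ᵥ (S⁻¹ *ᵥ Sum.elim (p.1 - mu) (p.2 - my))))

/-- Gaussian measure on `ℝ^d × ℝ^K` with mean `(mu, my)` and covariance `S`. -/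
def jointGauss (mu : Vec d) (my : Vec K)
    (S : Matrix (Fin d ⊕ Fin K) (Fin d ⊕ Fin K) ℝ) : Measure (Vec d × Vec K) :=
  volume.withDensity fun p => ENNReal.ofReal (jointGaussDensity mu my S p)

/-- Density of the Gaussian projection of a measure on `ℝ^d × ℝ^K`. -/
def gProjDensity2 (π : Measure (Vec d × Vec K)) : Vec d × Vec K → ℝ :=
  jointGaussDensity (meanU π) (meanY π) (covBlock π)

/-- Gaussian projection on `ℝ^d × ℝ^K`. -/
def Gproj2 (π : Measure (Vec d × Vec K)) : Measure (Vec d × Vec K) :=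
  jointGauss (meanU π) (meanY π) (covBlock π)

/-- Prediction operator `P`: the law of `Ψ(V) + ξ`, `V ∼ μ` independent of `ξ ∼ N(0, Σ)`. -/
def Pop (Psi : Vec d → Vec d) (Sig : Matrix (Fin d) (Fin d) ℝ)
    (μ : Measure (Vec d)) : Measure (Vec d) :=
  (μ.prod (gauss 0 Sig)).map fun p => Psi p.1 + p.2

/-- Lifting operator `Q`: the law of `(U, H(U) + η)`, `U ∼ μ` independent of `η ∼ N(0, Γ)`. -/
def Qop (H : Vec d → Vec K) (Gam : Matrix (Fin K) (Fin K) ℝ)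
    (μ : Measure (Vec d)) : Measure (Vec d × Vec K) :=
  (μ.prod (gauss 0 Gam)).map fun p => (p.1, H p.1 + p.2)

/-- Lebesgue density of `Pμ`. -/
def predDensity (Psi : Vec d → Vec d) (Sig : Matrix (Fin d) (Fin d) ℝ)
    (μ : Measure (Vec d)) (u : Vec d) : ℝ :=
  (Real.sqrt ((2 * Real.pi) ^ d * Sig.det))⁻¹ *
    ∫ v, Real.exp (-(1 / 2) * ((u - Psi v) ⬝ᵥ (Sig⁻¹ *ᵥ (u - Psi v)))) ∂μ

/-- Lebesgue density of `QPμ` on `ℝ^d × ℝ^K`. -/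
def qpDensity (Psi : Vec d → Vec d) (Sig : Matrix (Fin d) (Fin d) ℝ)
    (H : Vec d → Vec K) (Gam : Matrix (Fin K) (Fin K) ℝ)
    (μ : Measure (Vec d)) (p : Vec d × Vec K) : ℝ :=
  predDensity Psi Sig μ p.1 * gaussDensity (H p.1) Gam p.2

/-- Conditioning operator `B` applied to a (joint) density `f` and a datum `y†`:
the measure on `ℝ^d` with density `u ↦ f(u, y†) / ∫ f(U, y†) dU`. -/
def condM (f : Vec d × Vec K → ℝ) (ydag : Vec K) : Measure (Vec d) :=
  volume.withDensity fun u => ENNReal.ofReal (f (u, ydag) / ∫ U, f (U, ydag))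

/-- Kalman transport operator `T`: the pushforward of `π` under
`(u, y) ↦ u + C^{uy}(π) C^{yy}(π)⁻¹ (y† − y)`. -/
def Top (ydag : Vec K) (π : Measure (Vec d × Vec K)) : Measure (Vec d) :=
  π.map fun p => p.1 + covUY π *ᵥ ((covYY π)⁻¹ *ᵥ (ydag - p.2))

/-- Operator (spectral) norm of a real matrix. -/
def opNorm {ι : Type*} [Fintype ι] {κ : Type*} [Fintype κ] (A : Matrix ι κ ℝ) : ℝ :=
  ⨆ x : {x : κ → ℝ // ∑ i, x i ^ 2 ≤ 1}, enorm (A *ᵥ x.1)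

/-- Frobenius norm of a real matrix. -/
def frobNorm {ι κ : Type*} [Fintype ι] [Fintype κ] (A : Matrix ι κ ℝ) : ℝ :=
  Real.sqrt (∑ i, ∑ j, A i j ^ 2)

/-- Weighted norm `|x|_S = |S^{-1/2} x|`, i.e. `√(xᵀ S⁻¹ x)`. -/
def wnorm {n : ℕ} (S : Matrix (Fin n) (Fin n) ℝ) (x : Vec n) : ℝ :=
  Real.sqrt (x ⬝ᵥ (S⁻¹ *ᵥ x))

/-- The set `𝒫_R(ℝ^n)` of probability measures with `|M(μ)| ≤ R` and
`R⁻² I ≼ C(μ) ≼ R² I`. -/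
def PR (n : ℕ) (R : ℝ) : Set (Measure (Vec n)) :=
  {μ | IsProbabilityMeasure μ ∧ enorm (mean μ) ≤ R ∧
    loe ((R ^ 2)⁻¹ • 1) (cov μ) ∧ loe (cov μ) (R ^ 2 • 1)}

/-- The set `𝒫_R(ℝ^d × ℝ^K)`. -/
def PR2 (d K : ℕ) (R : ℝ) : Set (Measure (Vec d × Vec K)) :=
  {π | IsProbabilityMeasure π ∧ enorm (Sum.elim (meanU π) (meanY π)) ≤ R ∧
    loe ((R ^ 2)⁻¹ • 1) (covBlock π) ∧ loe (covBlock π) (R ^ 2 • 1)}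

/-- Smallest eigenvalue of a symmetric matrix (Rayleigh quotient form). -/
def lambdaMin {ι : Type*} [Fintype ι] (A : Matrix ι ι ℝ) : ℝ :=
  ⨅ x : {x : ι → ℝ // ∑ i, x i ^ 2 = 1}, x.1 ⬝ᵥ (A *ᵥ x.1)

/-- Kullback–Leibler divergence `KL(μ₁ ‖ μ₂) = ∫ (dμ₁/dμ₂) log (dμ₁/dμ₂) dμ₂`. -/
def kl {E : Type*} [MeasurableSpace E] (μ₁ μ₂ : Measure E) : ℝ :=
  ∫ v, ((μ₁.rnDeriv μ₂ v).toReal * Real.log (μ₁.rnDeriv μ₂ v).toReal) ∂μ₂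

/-!
Integrating a test function `|F(u, y)| ≤ 1 + |u|² + |y|²` over the noise produces the test function
`f(u) = 𝔼 F(u, H(u) + η)` on `ℝ^d`, and `𝔼 |H(u) + η|² = |H(u)|² + tr Γ` bounds it by
`(1 + κ_H² + tr Γ) g`. Since `μ` and `ν` need not have second moments, `F` may fail to be integrable
and the supremum defining `d_g` may be infinite. If `d_g(μ, ν)` is finite, a function of order `g`
is integrable for both measures or for neither, and in the latter case both integrals have the junk
value `0`. If it is infinite, test functions of `u` alone show that `d_g(Qμ, Qν)` is infinite too,
and both suprema have the junk value `0`.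
-/

open ProbabilityTheory

section WeightedTotalVariation

variable {E : Type*} [MeasurableSpace E] {G : E → ℝ} {μ ν : Measure E}

/-- Finiteness of the weighted total variation between `μ` and `ν`: the gaps `|μ[f] - ν[f]|` over
the test functions `|f| ≤ G` are bounded. Where this fails, the supremum `dG G μ ν` takes the junk
value `0`. -/
def DGFinite (G : E → ℝ) (μ ν : Measure E) : Prop :=
  BddAbove (Set.range fun f : {f : E → ℝ // Measurable f ∧ ∀ v, |f v| ≤ G v} =>
    |(∫ v, f.1 v ∂μ) - ∫ v, f.1 v ∂ν|)

lemma dG_nonneg : 0 ≤ dG G μ ν :=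
  Real.iSup_nonneg fun _ => abs_nonneg _

lemma dG_eq_zero_of_not_dGFinite (h : ¬DGFinite G μ ν) : dG G μ ν = 0 :=
  Real.iSup_of_not_bddAbove h

lemma DGFinite.symm (h : DGFinite G μ ν) : DGFinite G ν μ := by
  simpa only [DGFinite, abs_sub_comm] using h

lemma DGFinite.map {E' : Type*} [MeasurableSpace E'] {G' : E' → ℝ} {π : E → E'}
    (hπ : Measurable π) (hG : ∀ v, G' (π v) ≤ G v) (h : DGFinite G μ ν) :
    DGFinite G' (μ.map π) (ν.map π) := by
  obtain ⟨B, hB⟩ := h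
  refine ⟨B, ?_⟩
  rintro _ ⟨⟨f, hf, hfG⟩, rfl⟩
  dsimp only
  rw [integral_map hπ.aemeasurable hf.aestronglyMeasurable,
    integral_map hπ.aemeasurable hf.aestronglyMeasurable]
  exact hB ⟨⟨f ∘ π, hf.comp hπ, fun v => (hfG _).trans (hG v)⟩, rfl⟩

lemma DGFinite.abs_integral_sub_le_mul_dG (h : DGFinite G μ ν) {C : ℝ} (hC : 0 < C) {f : E → ℝ}
    (hf : Measurable f) (hfG : ∀ v, |f v| ≤ C * G v) :
    |(∫ v, f v ∂μ) - ∫ v, f v ∂ν| ≤ C * dG G μ ν := by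
  have hscaled (v : E) : |C⁻¹ * f v| ≤ G v := by
    rw [abs_mul, abs_of_pos (inv_pos.2 hC), inv_mul_le_iff₀ hC]
    exact hfG v
  have hgap : |(∫ v, C⁻¹ * f v ∂μ) - ∫ v, C⁻¹ * f v ∂ν| ≤ dG G μ ν :=
    le_ciSup h ⟨fun v => C⁻¹ * f v, hf.const_mul _, hscaled⟩
  rwa [integral_const_mul, integral_const_mul, ← mul_sub, abs_mul, abs_of_pos (inv_pos.2 hC),
    inv_mul_le_iff₀ hC] at hgap

-- Simple functions are integrable for both measures, so the gap bound applies to each of those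
-- below `|h|`, and the supremum over them is the Lebesgue integral of `|h|`.
lemma DGFinite.lintegral_enorm_le_add_mul_dG [IsFiniteMeasure μ] [IsFiniteMeasure ν]
    (hfin : DGFinite G μ ν) {C : ℝ} (hC : 0 < C) {h : E → ℝ} (hG : ∀ v, |h v| ≤ C * G v) :
    ∫⁻ v, ‖h v‖ₑ ∂ν ≤ ∫⁻ v, ‖h v‖ₑ ∂μ + ENNReal.ofReal (C * dG G μ ν) := by
  rw [lintegral_eq_nnreal _ ν]
  refine iSup₂_le fun φ hφ => ?_
  have hφ_integral (ρ : Measure E) [IsFiniteMeasure ρ] :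
      ENNReal.ofReal (∫ v, (φ v : ℝ) ∂ρ) = ∫⁻ v, φ v ∂ρ := by
    have hint : Integrable (fun v => (φ v : ℝ)) ρ :=
      (φ.map ((↑) : NNReal → ℝ)).integrable_of_isFiniteMeasure
    simp only [ofReal_integral_eq_lintegral_ofReal hint (ae_of_all _ fun v => (φ v).coe_nonneg),
      ENNReal.ofReal_coe_nnreal]
  have hφG (v : E) : |(φ v : ℝ)| ≤ C * G v := by
    rw [NNReal.abs_eq]
    exact (NNReal.coe_le_coe.2 (ENNReal.coe_le_coe.1 (hφ v))).trans (hG v)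
  have hgap := hfin.abs_integral_sub_le_mul_dG hC φ.measurable.coe_nnreal_real hφG
  calc (φ.map ((↑) : NNReal → ℝ≥0∞)).lintegral ν
      = ENNReal.ofReal (∫ v, (φ v : ℝ) ∂ν) := by
        rw [hφ_integral, ← SimpleFunc.lintegral_eq_lintegral]; rfl
    _ ≤ ENNReal.ofReal (∫ v, (φ v : ℝ) ∂μ + C * dG G μ ν) :=
        ENNReal.ofReal_le_ofReal (by linarith [(abs_le.1 hgap).1])
    _ ≤ ENNReal.ofReal (∫ v, (φ v : ℝ) ∂μ) + ENNReal.ofReal (C * dG G μ ν) :=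
        ENNReal.ofReal_add_le
    _ ≤ ∫⁻ v, ‖h v‖ₑ ∂μ + ENNReal.ofReal (C * dG G μ ν) := by
        rw [hφ_integral]
        gcongr with v
        exact hφ v

lemma DGFinite.integrable_of_integrable [IsFiniteMeasure μ] [IsFiniteMeasure ν]
    (hfin : DGFinite G μ ν) {C : ℝ} (hC : 0 < C) {h : E → ℝ} (hm : Measurable h)
    (hG : ∀ v, |h v| ≤ C * G v) (hμ : Integrable h μ) : Integrable h ν :=
  ⟨hm.aestronglyMeasurable, (hfin.lintegral_enorm_le_add_mul_dG hC hG).trans_lt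
    (ENNReal.add_lt_top.2 ⟨hμ.hasFiniteIntegral, ENNReal.ofReal_lt_top⟩)⟩

end WeightedTotalVariation

section KernelContraction

variable {X Y : Type*} [MeasurableSpace X] [MeasurableSpace Y] {κ : Kernel X Y}
  {g : X → ℝ} {G : Y → ℝ} {C : ℝ} {μ ν : Measure X}

lemma integral_comp_measure {F : Y → ℝ} (hF : Integrable F (κ ∘ₘ μ)) :
    ∫ y, F y ∂(κ ∘ₘ μ) = ∫ x, ∫ y, F y ∂κ x ∂μ := by
  rw [Measure.comp_eq_comp_const_apply] at hF ⊢
  rw [Kernel.integral_comp hF, Kernel.const_apply]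

variable [IsFiniteMeasure μ] [IsFiniteMeasure ν]

lemma integral_abs_kernel_le (hGi : ∀ x, Integrable G (κ x)) (hGC : ∀ x, ∫ y, G y ∂κ x ≤ C * g x)
    {F : Y → ℝ} (hF : Measurable F) (hFG : ∀ y, |F y| ≤ G y) (x : X) :
    ∫ y, |F y| ∂κ x ≤ C * g x :=
  (integral_mono ((hGi x).mono' hF.aestronglyMeasurable (ae_of_all _ hFG)).abs (hGi x) hFG).trans
    (hGC x)

lemma DGFinite.integrable_comp_of_integrable_comp (hfin : DGFinite g μ ν) (hC : 0 < C)
    (hGi : ∀ x, Integrable G (κ x)) (hGC : ∀ x, ∫ y, G y ∂κ x ≤ C * g x)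
    {F : Y → ℝ} (hF : Measurable F) (hFG : ∀ y, |F y| ≤ G y) (hμ : Integrable F (κ ∘ₘ μ)) :
    Integrable F (κ ∘ₘ ν) := by
  have hmeas : Measurable fun x => ∫ y, |F y| ∂κ x :=
    hF.abs.stronglyMeasurable.integral_kernel.measurable
  have hle (x : X) : |∫ y, |F y| ∂κ x| ≤ C * g x := by
    rw [abs_of_nonneg (integral_nonneg fun y => abs_nonneg _)]
    exact integral_abs_kernel_le hGi hGC hF hFG x
  rw [Measure.integrable_comp_iff hF.aestronglyMeasurable] at hμ ⊢
  exact ⟨ae_of_all _ fun x => (hGi x).mono' hF.aestronglyMeasurable (ae_of_all _ hFG),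
    hfin.integrable_of_integrable hC hmeas hle hμ.2⟩

theorem DGFinite.dG_comp_le (hfin : DGFinite g μ ν) (hC : 0 < C)
    (hGi : ∀ x, Integrable G (κ x)) (hGC : ∀ x, ∫ y, G y ∂κ x ≤ C * g x) :
    dG G (κ ∘ₘ μ) (κ ∘ₘ ν) ≤ C * dG g μ ν := by
  have hbound : 0 ≤ C * dG g μ ν := mul_nonneg hC.le dG_nonneg
  refine Real.iSup_le (fun ⟨F, hF, hFG⟩ => ?_) hbound
  dsimp only
  by_cases hμ : Integrable F (κ ∘ₘ μ)
  · have hν := hfin.integrable_comp_of_integrable_comp hC hGi hGC hF hFG hμ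
    rw [integral_comp_measure hμ, integral_comp_measure hν]
    exact hfin.abs_integral_sub_le_mul_dG hC hF.stronglyMeasurable.integral_kernel.measurable
      fun x => abs_integral_le_integral_abs.trans (integral_abs_kernel_le hGi hGC hF hFG x)
  · have hν : ¬Integrable F (κ ∘ₘ ν) := fun hν =>
      hμ (hfin.symm.integrable_comp_of_integrable_comp hC hGi hGC hF hFG hν)
    rw [integral_undef hμ, integral_undef hν, sub_zero, abs_zero]
    exact hbound

end KernelContraction

section Gaussian

lemma withDensity_map {α β : Type*} [MeasurableSpace α] [MeasurableSpace β] {μ : Measure α}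
    {T : α → β} (hT : Measurable T) {f : β → ℝ≥0∞} (hf : Measurable f) :
    (μ.map T).withDensity f = (μ.withDensity fun x => f (T x)).map T := by
  ext s hs
  rw [withDensity_apply _ hs, Measure.map_apply hT hs, withDensity_apply _ (hT hs),
    setLIntegral_map hs hf hT]

lemma pi_withDensity_ofReal {ι : Type*} [Fintype ι] {α : ι → Type*} [∀ i, MeasurableSpace (α i)]
    {μ : ∀ i, Measure (α i)} [∀ i, SigmaFinite (μ i)] {f : ∀ i, α i → ℝ}
    (hf : ∀ i, Integrable (f i) (μ i)) (hf0 : ∀ i x, 0 ≤ f i x) :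
    Measure.pi (fun i => (μ i).withDensity fun x => ENNReal.ofReal (f i x)) =
      (Measure.pi μ).withDensity fun x => ENNReal.ofReal (∏ i, f i (x i)) := by
  have (i : ι) := isFiniteMeasure_withDensity_ofReal (hf i).2
  refine Measure.pi_eq fun s hs => ?_
  rw [withDensity_apply _ (MeasurableSet.univ_pi hs), Measure.restrict_pi_pi,
    ← ofReal_integral_eq_lintegral_ofReal
      (Integrable.fintype_prod_dep fun i => (hf i).restrict)
      (ae_of_all _ fun x => Finset.prod_nonneg fun i _ => hf0 i _),
    integral_fintype_prod_eq_prod,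
    ENNReal.ofReal_prod_of_nonneg fun i _ => integral_nonneg (hf0 i)]
  refine Finset.prod_congr rfl fun i _ => ?_
  rw [withDensity_apply _ (hs i),
    ofReal_integral_eq_lintegral_ofReal (hf i).restrict (ae_of_all _ (hf0 i))]

lemma volume_eq_smul_map_affine {ι : Type*} [Fintype ι] [DecidableEq ι] {A : Matrix ι ι ℝ}
    (hA : A.det ≠ 0) (m : ι → ℝ) :
    (volume : Measure (ι → ℝ)) =
      ENNReal.ofReal |A.det| • (volume : Measure (ι → ℝ)).map fun x => m + A *ᵥ x := by
  have hlin := Real.map_matrix_volume_pi_eq_smul_volume_pi hA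
  have hcomp : (fun x => m + A *ᵥ x) = (m + ·) ∘ toLin' A := rfl
  rw [hcomp, ← Measure.map_map (by fun_prop) (by fun_prop), hlin, Measure.map_smul,
    map_add_left_eq_self, smul_smul, ← ENNReal.ofReal_mul (abs_nonneg _), ← abs_mul,
    mul_inv_cancel₀ hA, abs_one, ENNReal.ofReal_one, one_smul]

lemma pi_gaussianReal_eq_withDensity {ι : Type*} [Fintype ι] (m : ι → ℝ) {v : ι → NNReal}
    (hv : ∀ i, v i ≠ 0) :
    Measure.pi (fun i => gaussianReal (m i) (v i)) =
      volume.withDensity fun x => ENNReal.ofReal (∏ i, gaussianPDFReal (m i) (v i) (x i)) := by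
  simp_rw [gaussianReal_of_var_ne_zero _ (hv _)]
  exact pi_withDensity_ofReal (fun i => integrable_gaussianPDFReal (m i) (v i))
    fun i => gaussianPDFReal_nonneg (m i) (v i)

lemma mulVec_dotProduct_inv_mul_transpose_mulVec {ι R : Type*} [Fintype ι] [DecidableEq ι]
    [CommRing R] {A : Matrix ι ι R} (hA : IsUnit A.det) (x : ι → R) :
    (A *ᵥ x) ⬝ᵥ ((A * Aᵀ)⁻¹ *ᵥ (A *ᵥ x)) = x ⬝ᵥ x := by
  have hAt : IsUnit Aᵀ.det := by rwa [det_transpose]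
  rw [mulVec_mulVec, Matrix.mul_inv_rev, Matrix.mul_assoc, nonsing_inv_mul A hA,
    Matrix.mul_one, dotProduct_comm, dotProduct_mulVec, ← mulVec_transpose, mulVec_mulVec,
    mul_nonsing_inv Aᵀ hAt, one_mulVec]

variable {n : ℕ}

lemma prod_gaussianPDFReal (x : Vec n) :
    ∏ i, gaussianPDFReal 0 1 (x i) =
      (Real.sqrt ((2 * Real.pi) ^ n))⁻¹ * Real.exp (-(1 / 2) * (x ⬝ᵥ x)) := by
  have hsqrt : Real.sqrt ((2 * Real.pi) ^ n) = Real.sqrt (2 * Real.pi) ^ n := by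
    rw [Real.sqrt_eq_iff_mul_self_eq (by positivity) (by positivity), ← mul_pow,
      Real.mul_self_sqrt (by positivity)]
  simp only [gaussianPDFReal, NNReal.coe_one, mul_one, sub_zero, Finset.prod_mul_distrib,
    Finset.prod_const, Finset.card_univ, Fintype.card_fin, ← Real.exp_sum, hsqrt, inv_pow]
  congr 2
  rw [dotProduct, Finset.mul_sum]
  exact Finset.sum_congr rfl fun i _ => by ring

lemma measurable_gaussDensity (m : Vec n) (S : Matrix (Fin n) (Fin n) ℝ) :
    Measurable (gaussDensity m S) := by
  unfold gaussDensity dotProduct mulVec dotProduct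
  fun_prop

variable {A S : Matrix (Fin n) (Fin n) ℝ}

lemma abs_det_mul_gaussDensity_affine (hA : A.det ≠ 0) (m x : Vec n) :
    |A.det| * gaussDensity m (A * Aᵀ) (m + A *ᵥ x) = ∏ i, gaussianPDFReal 0 1 (x i) := by
  rw [prod_gaussianPDFReal, gaussDensity, add_sub_cancel_left,
    mulVec_dotProduct_inv_mul_transpose_mulVec hA.isUnit, det_mul, det_transpose,
    Real.sqrt_mul (by positivity), Real.sqrt_mul_self_eq_abs, mul_inv]
  have := abs_ne_zero.2 hA
  field_simp

theorem gauss_mul_transpose (hA : A.det ≠ 0) (m : Vec n) :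
    gauss m (A * Aᵀ) =
      (Measure.pi fun _ : Fin n => gaussianReal 0 1).map fun x => m + A *ᵥ x := by
  have haff : Measurable fun x : Vec n => m + A *ᵥ x := by
    unfold mulVec dotProduct
    fun_prop
  rw [gauss, volume_eq_smul_map_affine hA m, withDensity_smul_measure,
    withDensity_map haff (measurable_gaussDensity m _).ennreal_ofReal, ← Measure.map_smul,
    ← withDensity_smul' _ _ ENNReal.ofReal_ne_top,
    pi_gaussianReal_eq_withDensity _ fun _ => one_ne_zero]
  congr 2
  ext x
  rw [Pi.smul_apply, smul_eq_mul, ← ENNReal.ofReal_mul (abs_nonneg _),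
    abs_det_mul_gaussDensity_affine hA]

open scoped MatrixOrder in
lemma gauss_eq_map_multivariateGaussian (hS : S.PosDef) (m : Vec n) :
    gauss m S = (multivariateGaussian (WithLp.toLp 2 m) S).map WithLp.ofLp := by
  set A := CFC.sqrt S
  have hAt : Aᵀ = A := by
    have hself := (CFC.sqrt_nonneg S).isSelfAdjoint
    rwa [isSelfAdjoint_iff, star_eq_conjTranspose, conjTranspose_eq_transpose_of_trivial] at hself
  have hAA : A * Aᵀ = S := hAt.symm ▸ CFC.sqrt_mul_sqrt_self S hS.posSemidef.nonneg
  have hA : A.det ≠ 0 := fun h => hS.det_pos.ne' (by rw [← hAA, det_mul, h, zero_mul])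
  rw [multivariateGaussian, ← map_pi_eq_stdGaussian, Measure.map_map (by fun_prop) (by fun_prop),
    Measure.map_map (by fun_prop) (by fun_prop), ← hAA, gauss_mul_transpose hA, hAA]
  rfl

lemma isProbabilityMeasure_gauss (hS : S.PosDef) (m : Vec n) :
    IsProbabilityMeasure (gauss m S) := by
  rw [gauss_eq_map_multivariateGaussian hS]
  exact Measure.isProbabilityMeasure_map (by fun_prop)

lemma measurePreserving_eval_gauss (hS : S.PosDef) (m : Vec n) (i : Fin n) :
    MeasurePreserving (fun x : Vec n => x i) (gauss m S)
      (gaussianReal (m i) (S i i).toNNReal) := by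
  refine ⟨measurable_pi_apply i, ?_⟩
  rw [gauss_eq_map_multivariateGaussian hS, Measure.map_map (by fun_prop) (by fun_prop)]
  exact (measurePreserving_eval_multivariateGaussian hS.posSemidef).map_eq

lemma memLp_eval_gauss (hS : S.PosDef) (m : Vec n) (i : Fin n) (p : NNReal) :
    MemLp (fun x : Vec n => x i) p (gauss m S) :=
  (memLp_id_gaussianReal p).comp_measurePreserving (measurePreserving_eval_gauss hS m i)

lemma integral_eval_gauss (hS : S.PosDef) (m : Vec n) (i : Fin n) :
    ∫ x, x i ∂gauss m S = m i := by
  have h := measurePreserving_eval_gauss hS m i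
  rw [← integral_map (f := fun y : ℝ => y) h.aemeasurable (by fun_prop), h.map_eq,
    integral_id_gaussianReal]

lemma variance_eval_gauss (hS : S.PosDef) (m : Vec n) (i : Fin n) :
    Var[fun x => x i; gauss m S] = S i i := by
  have h := measurePreserving_eval_gauss hS m i
  rw [← Function.id_comp (fun x : Vec n => x i), ← variance_map aemeasurable_id h.aemeasurable,
    h.map_eq, variance_id_gaussianReal, Real.coe_toNNReal _ hS.posSemidef.diag_nonneg]

lemma sum_integral_eval_sq_gauss_zero (hS : S.PosDef) :
    ∑ i, ∫ x, x i ^ 2 ∂gauss 0 S = S.trace :=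
  Finset.sum_congr rfl fun i _ => by
    rw [← variance_of_integral_eq_zero (measurable_pi_apply i).aemeasurable
      (integral_eval_gauss hS 0 i), variance_eval_gauss hS, diag_apply]

end Gaussian

section Lifting

variable {X ι : Type*} [MeasurableSpace X] {H : X → ι → ℝ} {ρ : Measure (ι → ℝ)} {μ ν : Measure X}

/-- The lifting operator with arbitrary noise: the law of `(U, H(U) + η)`, where `U ∼ μ` is
independent of `η ∼ ρ`. -/
def lift (H : X → ι → ℝ) (ρ : Measure (ι → ℝ)) (μ : Measure X) : Measure (X × (ι → ℝ)) :=
  (μ.prod ρ).map fun p => (p.1, H p.1 + p.2)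

/-- The lifting operator as a kernel: `liftKernel H ρ u` is the law of `(u, H(u) + η)`, where
`η ∼ ρ`. It is the zero kernel when `H` is not measurable. -/
def liftKernel (H : X → ι → ℝ) (ρ : Measure (ι → ℝ)) : Kernel X (X × (ι → ℝ)) :=
  (Kernel.id ×ₖ Kernel.const X ρ).map fun p => (p.1, H p.1 + p.2)

lemma measurable_lift (hHm : Measurable H) :
    Measurable fun p : X × (ι → ℝ) => (p.1, H p.1 + p.2) := by
  fun_prop

lemma liftKernel_apply (hHm : Measurable H) [SFinite ρ] (u : X) :
    liftKernel H ρ u = ρ.map fun η => (u, H u + η) := by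
  rw [liftKernel, Kernel.map_apply _ (measurable_lift hHm), Kernel.prod_apply, Kernel.id_apply,
    Kernel.const_apply, Measure.dirac_prod,
    Measure.map_map (measurable_lift hHm) measurable_prodMk_left]
  rfl

lemma lift_eq_comp (hHm : Measurable H) [SFinite ρ] [SFinite μ] :
    lift H ρ μ = liftKernel H ρ ∘ₘ μ := by
  rw [liftKernel, ← Measure.map_comp _ _ (measurable_lift hHm), ← Measure.compProd_eq_comp_prod,
    Measure.compProd_const, lift]

lemma map_fst_lift (hHm : Measurable H) [IsProbabilityMeasure ρ] [SFinite μ] :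
    (lift H ρ μ).map Prod.fst = μ := by
  rw [lift, Measure.map_map measurable_fst (measurable_lift hHm)]
  exact measurePreserving_fst.map_eq

lemma DGFinite.of_lift (hHm : Measurable H) [IsProbabilityMeasure ρ] [SFinite μ]
    [SFinite ν] {g : X → ℝ} {G : X × (ι → ℝ) → ℝ} (hG : ∀ p, g p.1 ≤ G p)
    (h : DGFinite G (lift H ρ μ) (lift H ρ ν)) : DGFinite g μ ν := by
  rw [← map_fst_lift (μ := μ) (ρ := ρ) hHm, ← map_fst_lift (μ := ν) (ρ := ρ) hHm]
  exact h.map measurable_fst hG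

lemma integrable_const_add_sq {Ω : Type*} [MeasurableSpace Ω] {P : Measure Ω}
    [IsFiniteMeasure P] {Z : Ω → ℝ} (hZ : MemLp Z 2 P) (c : ℝ) :
    Integrable (fun ω => (c + Z ω) ^ 2) P :=
  ((memLp_const c).add hZ).integrable_sq

lemma integral_const_add_sq {Ω : Type*} [MeasurableSpace Ω] {P : Measure Ω}
    [IsProbabilityMeasure P] {Z : Ω → ℝ} (hZ : MemLp Z 2 P) (c : ℝ) :
    ∫ ω, (c + Z ω) ^ 2 ∂P = c ^ 2 + 2 * c * ∫ ω, Z ω ∂P + ∫ ω, Z ω ^ 2 ∂P := by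
  have hlin : Integrable (fun ω => 2 * c * Z ω) P := (hZ.integrable one_le_two).const_mul _
  have haff : Integrable (fun ω => c ^ 2 + 2 * c * Z ω) P := (integrable_const _).add hlin
  simp_rw [add_sq]
  rw [integral_add haff hZ.integrable_sq, integral_add (integrable_const _) hlin,
    integral_const_mul, integral_const, probReal_univ, one_smul]

variable [Fintype ι]

lemma integrable_sum_add_sq [IsFiniteMeasure ρ] (hρ : ∀ i, MemLp (fun y : ι → ℝ => y i) 2 ρ)
    (m : ι → ℝ) :
    Integrable (fun y => ∑ i, (m i + y i) ^ 2) ρ :=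
  integrable_finsetSum _ fun i _ => integrable_const_add_sq (hρ i) (m i)

lemma integrable_liftKernel_add_sum_sq (hHm : Measurable H) [IsFiniteMeasure ρ]
    (hρ : ∀ i, MemLp (fun y : ι → ℝ => y i) 2 ρ) {g : X → ℝ} (hg : Measurable g) (u : X) :
    Integrable (fun p : X × (ι → ℝ) => g p.1 + ∑ i, p.2 i ^ 2) (liftKernel H ρ u) := by
  rw [liftKernel_apply hHm, integrable_map_measure (by fun_prop) (by fun_prop)]
  exact (integrable_const (g u)).add (integrable_sum_add_sq hρ (H u))

variable [IsProbabilityMeasure ρ]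

lemma integral_sum_add_sq (hρ : ∀ i, MemLp (fun y : ι → ℝ => y i) 2 ρ)
    (hρ0 : ∀ i, ∫ y, y i ∂ρ = 0) (m : ι → ℝ) :
    ∫ y, ∑ i, (m i + y i) ^ 2 ∂ρ = ∑ i, m i ^ 2 + ∑ i, ∫ y, y i ^ 2 ∂ρ := by
  rw [integral_finsetSum _ fun i _ => integrable_const_add_sq (hρ i) (m i),
    ← Finset.sum_add_distrib]
  refine Finset.sum_congr rfl fun i _ => ?_
  rw [integral_const_add_sq (hρ i), hρ0, mul_zero, add_zero]

lemma integral_liftKernel_add_sum_sq (hHm : Measurable H)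
    (hρ : ∀ i, MemLp (fun y : ι → ℝ => y i) 2 ρ) (hρ0 : ∀ i, ∫ y, y i ∂ρ = 0)
    {g : X → ℝ} (hg : Measurable g) (u : X) :
    ∫ p, (g p.1 + ∑ i, p.2 i ^ 2) ∂liftKernel H ρ u =
      g u + (∑ i, H u i ^ 2 + ∑ i, ∫ y, y i ^ 2 ∂ρ) := by
  rw [liftKernel_apply hHm, integral_map (by fun_prop) (by fun_prop)]
  simp only [Pi.add_apply]
  rw [integral_add (integrable_const _) (integrable_sum_add_sq hρ (H u)),
    integral_sum_add_sq hρ hρ0, integral_const, probReal_univ, one_smul]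

lemma sum_sq_le_sq_of_enorm_le {y : ι → ℝ} {c : ℝ} (h : enorm y ≤ c) : ∑ i, y i ^ 2 ≤ c ^ 2 :=
  (Real.sqrt_le_left ((Real.sqrt_nonneg _).trans h)).1 h

theorem Q_lipschitz_general {g : X → ℝ} (hgm : Measurable g) (hg : ∀ u, 1 ≤ g u) {κH : ℝ}
    (hHm : Measurable H) (hHb : ∀ u, enorm (H u) ≤ κH)
    (hρ : ∀ i, MemLp (fun y : ι → ℝ => y i) 2 ρ) (hρ0 : ∀ i, ∫ y, y i ∂ρ = 0)
    [IsFiniteMeasure μ] [IsFiniteMeasure ν] :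
    dG (fun p => g p.1 + ∑ i, p.2 i ^ 2) (lift H ρ μ) (lift H ρ ν) ≤
      (1 + κH ^ 2 + ∑ i, ∫ y, y i ^ 2 ∂ρ) * dG g μ ν := by
  have hvar : 0 ≤ ∑ i, ∫ y, y i ^ 2 ∂ρ :=
    Finset.sum_nonneg fun i _ => integral_nonneg fun y => sq_nonneg (y i)
  by_cases hfin : DGFinite g μ ν
  · rw [lift_eq_comp hHm, lift_eq_comp hHm]
    refine hfin.dG_comp_le (by positivity) (integrable_liftKernel_add_sum_sq hHm hρ hgm)
      fun u => ?_
    rw [integral_liftKernel_add_sum_sq hHm hρ hρ0 hgm]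
    have hH := sum_sq_le_sq_of_enorm_le (hHb u)
    nlinarith [hg u, sq_nonneg κH]
  · have hfin' : ¬DGFinite (fun p => g p.1 + ∑ i, p.2 i ^ 2) (lift H ρ μ) (lift H ρ ν) :=
      mt (DGFinite.of_lift hHm fun p =>
        le_add_of_nonneg_right (Finset.sum_nonneg fun i _ => sq_nonneg (p.2 i))) hfin
    rw [dG_eq_zero_of_not_dGFinite hfin, dG_eq_zero_of_not_dGFinite hfin', mul_zero]

end Lifting

/-- **The lifting operator `Q` is globally Lipschitz** (Lemma A.7):
`d_g(Qμ, Qν) ≤ (1 + κ_H² + tr Γ) d_g(μ, ν)`. -/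
theorem Q_lipschitz
    (d K : ℕ) (κH : ℝ) (H : Vec d → Vec K) (hHm : Measurable H)
    (hHb : ∀ v, enorm (H v) ≤ κH)
    (Gam : Matrix (Fin K) (Fin K) ℝ) (hGam : Gam.PosDef)
    (μ ν : Measure (Vec d)) (hμ : IsProbabilityMeasure μ) (hν : IsProbabilityMeasure ν) :
    dG gw2 (Qop H Gam μ) (Qop H Gam ν) ≤ (1 + κH ^ 2 + Gam.trace) * dG gw μ ν := by
  have := isProbabilityMeasure_gauss hGam 0
  rw [← sum_integral_eval_sq_gauss_zero hGam]
  exact Q_lipschitz_general (g := gw) (by unfold gw; fun_prop)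
    (fun u => le_add_of_nonneg_right (Finset.sum_nonneg fun i _ => sq_nonneg (u i))) hHm hHb
    (memLp_eval_gauss hGam 0 · 2) (integral_eval_gauss hGam 0)

end EnKF
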